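/- The q-secant number satisfies E_{2n}(q) = \frac{1}{(1-q)^{2n}} \sum_{k=0}^n \left( \binom{2n}{n-k} - \binom{2n}{n-k-1} \right) \sum_{i=0}^{2k} (-1)^{i+k} q^{i(2k-i)+k}. -/

import Mathlib

open Finset Polynomial
open scoped Classical

noncomputable section
/-- The value of a step: `+1` for an up step, `-1` for a down step. -/
def stepVal (b : Bool) : ℤ := if b then 1 else -1

/-- Height of the path after its first `i` steps. -/
def pathHeight {m : ℕ} (s : Fin m → Bool) (i : ℕ) : ℤ :=
  ∑ j : Fin m, if (j : ℕ) < i then stepVal (s j) else 0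

/-- A Dyck path: all partial sums nonnegative, final height `0`. -/
def IsDyck {m : ℕ} (s : Fin m → Bool) : Prop :=
  (∀ i : Fin m, 0 ≤ pathHeight s ((i : ℕ) + 1)) ∧ pathHeight s m = 0
/-- The `q`-integer `[k]_q = 1 + q + ⋯ + q^(k-1)` as a polynomial in `ℤ[q]`. -/
def qNum (k : ℕ) : Polynomial ℤ := ∑ j ∈ Finset.range k, X ^ j

/-- The `q`-tangent polynomial `E_{2n+1}(q)`: sum over Dyck paths of length `2n`,
where every step (up or down) starting at height `h` contributes `[h+1]_q`. -/
def Etan (n : ℕ) : Polynomial ℤ :=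
  ∑ s ∈ Finset.univ.filter (fun s : Fin (2*n) → Bool => IsDyck s),
    ∏ i : Fin (2*n), qNum ((pathHeight s (i : ℕ)).toNat + 1)

/-- The `q`-secant polynomial `E_{2n}(q)`: sum over Dyck paths of length `2n`,
where an up step from height `h` contributes `[h+1]_q` and a down step from
height `h` contributes `[h]_q`. -/
def Esec (n : ℕ) : Polynomial ℤ :=
  ∑ s ∈ Finset.univ.filter (fun s : Fin (2*n) → Bool => IsDyck s),
    ∏ i : Fin (2*n),
      if s i then qNum ((pathHeight s (i : ℕ)).toNat + 1)
      else qNum ((pathHeight s (i : ℕ)).toNat)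
/-- Binomial coefficient `a choose b` with integer lower index, equal to `0`
when `b < 0`. -/
def chooseInt (a : ℕ) (b : ℤ) : ℤ := if 0 ≤ b then a.choose b.toNat else 0

/-!
Multiplying by `(1 - q)^{2n}` turns the weights `[h]_q` into `1 - q^h`, so the left-hand side is
`(T^{2n} δ_0)(0)` for the tridiagonal operator `T` with these weights. Expand `T^{2n}` in the
rescaled Chebyshev polynomials `S_k`: as `X S_k = S_{k+1} + S_{k-1}` for all integers `k`, the
binomial theorem gives `X^m = ∑ᵢ (m choose i) S_{m-2i}`, and the reflection `S_{-k-2} = -S_k` folds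
this into the differences of binomial coefficients of the formula. What remains is the value of
`S_k(T) δ_0` at `0`. The shift operator `σ` satisfies `T σ = q σ T + (1 - q) (1 + σ²)` and
`T δ_0 = (1 - q) σ δ_0`, which upgrades the three-term recurrence to
`S_k(T) δ_0 = q^k S_{k-2}(T) δ_0 + (1 - q^k) σ S_{k-1}(T) δ_0 + c_k δ_0` with
`c_0 = 2`, `c_1 = 0`, `c_{k+2} = -q c_k`; evaluating at `0` kills the shifted term. The constants
`c_k` are the values at `0` of Dickson polynomials with parameter `q`.
-/

section ChebyshevExpansion

variable (R : Type*) [CommRing R]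

theorem X_pow_mul_S_eq_sum_antidiagonal (m : ℕ) (k : ℤ) :
    X ^ m * Chebyshev.S R k =
      ∑ ij ∈ antidiagonal m, (m.choose ij.1 : R[X]) * Chebyshev.S R (k + ij.2 - ij.1) := by
  induction m generalizing k with
  | zero => simp
  | succ m ih =>
    have X_mul_S : X * Chebyshev.S R k = Chebyshev.S R (k + 1) + Chebyshev.S R (k - 1) := by
      rw [Chebyshev.S_add_one, sub_add_cancel]
    rw [sum_antidiagonal_choose_succ_mul (fun i j ↦ Chebyshev.S R (k + j - i)), pow_succ,
      mul_assoc, X_mul_S, mul_add, ih, ih]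
    congr 1 <;> refine sum_congr rfl fun ij hij ↦ ?_
    · push_cast
      ring_nf
    · rw [Nat.choose_symm_of_eq_add (mem_antidiagonal.mp hij).symm]
      push_cast
      ring_nf

theorem chooseInt_natCast_sub {a b c : ℕ} (h : c ≤ b) :
    chooseInt a ((b : ℤ) - c) = a.choose (b - c) := by
  rw [← Nat.cast_sub h]
  simp [chooseInt]

theorem X_pow_two_mul_eq_sum_S (n : ℕ) :
    (X : R[X]) ^ (2 * n) = ∑ k ∈ range (n + 1),
      ((chooseInt (2 * n) ((n : ℤ) - k) - chooseInt (2 * n) ((n : ℤ) - k - 1) : ℤ) : R[X]) *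
        Chebyshev.S R (2 * k : ℕ) := by
  have positive_part :
      ∑ i ∈ range (n + 1), ((2 * n).choose i : R[X]) * Chebyshev.S R ((2 * n - i : ℕ) - i) =
        ∑ k ∈ range (n + 1), (chooseInt (2 * n) ((n : ℤ) - k) : R[X]) *
          Chebyshev.S R (2 * k : ℕ) := by
    rw [← sum_range_reflect]
    refine sum_congr rfl fun k hk ↦ ?_
    have hk : k ≤ n := mem_range_succ_iff.mp hk
    rw [chooseInt_natCast_sub hk, Int.cast_natCast, Nat.add_sub_cancel,
      show ((2 * n - (n - k) : ℕ) : ℤ) - (n - k : ℕ) = (2 * k : ℕ) by omega]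
  have negative_part :
      ∑ i ∈ range n, ((2 * n).choose (n + 1 + i) : R[X]) *
          Chebyshev.S R ((2 * n - (n + 1 + i) : ℕ) - (n + 1 + i : ℕ)) =
        -∑ k ∈ range (n + 1), (chooseInt (2 * n) ((n : ℤ) - k - 1) : R[X]) *
          Chebyshev.S R (2 * k : ℕ) := by
    have last_eq_zero : chooseInt (2 * n) ((n : ℤ) - n - 1) = 0 := by simp [chooseInt]
    rw [sum_range_succ, last_eq_zero, Int.cast_zero, zero_mul, add_zero, ← sum_neg_distrib]
    refine sum_congr rfl fun k hk ↦ ?_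
    have hk : k + 1 ≤ n := mem_range.mp hk
    have reflect : ((2 * n - (n + 1 + k) : ℕ) : ℤ) - (n + 1 + k : ℕ) = -(2 * k : ℕ) - 2 := by
      omega
    rw [reflect, Chebyshev.S_neg_sub_two, mul_neg, sub_sub, ← Nat.cast_succ,
      chooseInt_natCast_sub hk, Int.cast_natCast,
      Nat.choose_symm_of_eq_add (b := n - (k + 1)) (by omega)]
  rw [← mul_one (X ^ (2 * n)), ← Chebyshev.S_zero, X_pow_mul_S_eq_sum_antidiagonal,
    Nat.sum_antidiagonal_eq_sum_range_succ_mk, show (2 * n).succ = n + 1 + n by omega,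
    sum_range_add]
  simp only [zero_add, Int.cast_sub, sub_mul, sum_sub_distrib]
  rw [positive_part, negative_part, sub_eq_add_neg]

end ChebyshevExpansion

section CommutationRelation

variable {R M : Type*} [CommRing R] [AddCommGroup M] [Module R M]

theorem eq_smul_add_smul_of_three_term_of_q_commutation {T σ : Module.End R M} {v : M} {q s : R}
    {w : ℤ → M} (hTσ : T * σ = q • (σ * T) + (1 - q) • (1 + σ * σ))
    (hv : T v = s • v + (1 - q) • σ v) (hw : ∀ j, T (w j) = w (j + 1) + w (j - 1))
    (hw_neg_one : w (-1) = 0) (hw_zero : w 0 = v) (k : ℕ) :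
    w k = q ^ k • w (k - 2) + (1 - q ^ k) • σ (w (k - 1)) + (dickson 1 q k).eval s • v := by
  induction k using Nat.twoStepInduction with
  | zero =>
    have hw_neg_two : w (-2) = -v := by
      simpa [hw_neg_one, hw_zero, eq_neg_iff_add_eq_zero, add_comm] using (hw (-1)).symm
    simp only [Nat.cast_zero, zero_sub, hw_zero, hw_neg_two, pow_zero, sub_self, zero_smul,
      dickson_zero, eval_sub, eval_ofNat, Nat.cast_one, eval_one]
    module
  | one =>
    have hw_one : w 1 = T v := by simpa [hw_neg_one, hw_zero] using (hw 0).symm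
    simp [hw_one, hw_neg_one, hw_zero, hv, add_comm]
  | more k ih₀ ih₁ =>
    have hw₀ : T (w (k - 1)) = w k + w (k - 2) := by
      rw [hw, sub_add_cancel, sub_sub, one_add_one_eq_two]
    have hw₂ : T (w (k + 1)) = w (k + 2) + w k := by
      rw [hw, add_assoc, one_add_one_eq_two, add_sub_cancel_right]
    have hTσw : T (σ (w k)) = q • σ (T (w k)) + (1 - q) • (w k + σ (σ (w k))) := by
      simpa using congr($hTσ (w k))
    rw [show ((k + 1 : ℕ) : ℤ) - 2 = k - 1 by omega, Nat.cast_succ, add_sub_cancel_right] at ih₁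
    rw [show ((k + 2 : ℕ) : ℤ) - 2 = k by omega, show ((k + 2 : ℕ) : ℤ) - 1 = k + 1 by omega,
      Nat.cast_add, Nat.cast_ofNat, dickson_add_two, eval_sub, eval_mul, eval_mul, eval_X, eval_C]
    have T_ih₁ := congr(T $ih₁)
    have σ_ih₁ := congr(σ $ih₁)
    simp only [map_add, map_smul, hTσw, hv, hw₀, hw₂, hw k] at T_ih₁ σ_ih₁
    -- In `T w_{k+1}`, the recurrence at `k + 1` removes `σ² w_k`, and the one at `k` the remaining
    -- `q (1 - q^k) σ w_{k-1}`.
    linear_combination (norm := module) T_ih₁ - (1 - q) • σ_ih₁ - q • ih₀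

end CommutationRelation

section DyckPaths

/-- The path `s`, started at height `h`, stays nonnegative and ends at height `0`. -/
def IsDyckFrom (h : ℕ) {m : ℕ} (s : Fin m → Bool) : Prop :=
  (∀ i : Fin m, 0 ≤ h + pathHeight s ((i : ℕ) + 1)) ∧ h + pathHeight s m = 0

theorem pathHeight_zero {m : ℕ} (s : Fin m → Bool) : pathHeight s 0 = 0 := by
  simp [pathHeight]

theorem pathHeight_cons_succ {m : ℕ} (b : Bool) (s : Fin m → Bool) (i : ℕ) :
    pathHeight (Fin.cons b s : Fin (m + 1) → Bool) (i + 1) = stepVal b + pathHeight s i := by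
  simp [pathHeight, Fin.sum_univ_succ]

theorem isDyckFrom_zero_iff {m : ℕ} (s : Fin m → Bool) : IsDyckFrom 0 s ↔ IsDyck s := by
  simp [IsDyck, IsDyckFrom]

theorem isDyckFrom_cons_true (h : ℕ) {m : ℕ} (s : Fin m → Bool) :
    IsDyckFrom h (Fin.cons true s : Fin (m + 1) → Bool) ↔ IsDyckFrom (h + 1) s := by
  have : 0 ≤ (h : ℤ) + 1 := by positivity
  simp [IsDyckFrom, Fin.forall_fin_succ, pathHeight_cons_succ, pathHeight_zero, stepVal, add_assoc,
    this]

theorem isDyckFrom_succ_cons_false (h : ℕ) {m : ℕ} (s : Fin m → Bool) :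
    IsDyckFrom (h + 1) (Fin.cons false s : Fin (m + 1) → Bool) ↔ IsDyckFrom h s := by
  simp [IsDyckFrom, Fin.forall_fin_succ, pathHeight_cons_succ, pathHeight_zero, stepVal, add_assoc]

theorem not_isDyckFrom_zero_cons_false {m : ℕ} (s : Fin m → Bool) :
    ¬ IsDyckFrom 0 (Fin.cons false s : Fin (m + 1) → Bool) := by
  simp [IsDyckFrom, Fin.forall_fin_succ, pathHeight_cons_succ, pathHeight_zero, stepVal]

variable {R : Type*} [CommSemiring R]

/-- The weight of the path `s` started at height `h`: an up step from height `k` contributes `u k`,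
a down step from height `k` contributes `d k`. -/
def pathWeight (u d : ℕ → R) (h : ℕ) {m : ℕ} (s : Fin m → Bool) : R :=
  ∏ i : Fin m, if s i then u (h + pathHeight s i).toNat else d (h + pathHeight s i).toNat

theorem pathWeight_cons_true (u d : ℕ → R) (h : ℕ) {m : ℕ} (s : Fin m → Bool) :
    pathWeight u d h (Fin.cons true s : Fin (m + 1) → Bool) = u h * pathWeight u d (h + 1) s := by
  simp [pathWeight, Fin.prod_univ_succ, pathHeight_cons_succ, pathHeight_zero, stepVal, add_assoc]

theorem pathWeight_succ_cons_false (u d : ℕ → R) (h : ℕ) {m : ℕ} (s : Fin m → Bool) :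
    pathWeight u d (h + 1) (Fin.cons false s : Fin (m + 1) → Bool) =
      d (h + 1) * pathWeight u d h s := by
  simp [pathWeight, Fin.prod_univ_succ, pathHeight_cons_succ, pathHeight_zero, stepVal, add_assoc]

/-- The generating function of the nonnegative paths of length `m` from height `h` to height `0`,
with the step weights `u` and `d` of `pathWeight`. -/
def dyckSum (u d : ℕ → R) (m h : ℕ) : R :=
  ∑ s : Fin m → Bool with IsDyckFrom h s, pathWeight u d h s

variable (R) in
/-- The shift operator `σ` on sequences, `(σ f)(h) = f(h - 1)` with `f(-1) = 0`. -/
def rightShift : Module.End R (ℕ → R) where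
  toFun f
    | 0 => 0
    | h + 1 => f h
  map_add' f g := by ext (_ | h) <;> simp
  map_smul' c f := by ext (_ | h) <;> simp

/-- The tridiagonal operator that prepends a step to a path with step weights `u` and `d`. -/
def dyckTransfer (u d : ℕ → R) : Module.End R (ℕ → R) where
  toFun f h := u h * f (h + 1) + d h * rightShift R f h
  map_add' f g := by ext h; simp only [Pi.add_apply, map_add]; ring
  map_smul' c f := by
    ext h; simp only [Pi.smul_apply, map_smul, smul_eq_mul, RingHom.id_apply]; ring

@[simp]
theorem rightShift_apply_zero (f : ℕ → R) : rightShift R f 0 = 0 := rfl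

@[simp]
theorem rightShift_apply_succ (f : ℕ → R) (h : ℕ) : rightShift R f (h + 1) = f h := rfl

theorem dyckTransfer_apply (u d : ℕ → R) (f : ℕ → R) (h : ℕ) :
    dyckTransfer u d f h = u h * f (h + 1) + d h * rightShift R f h := rfl

theorem dyckSum_zero (u d : ℕ → R) : dyckSum u d 0 = Pi.single 0 1 := by
  ext h
  by_cases hh : h = 0 <;> simp [dyckSum, IsDyckFrom, pathWeight, pathHeight, hh]

theorem dyckSum_succ (u d : ℕ → R) (m : ℕ) :
    dyckSum u d (m + 1) = dyckTransfer u d (dyckSum u d m) := by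
  ext h
  rw [dyckTransfer_apply, dyckSum, sum_filter, ← (Fin.consEquiv fun _ ↦ Bool).sum_comp,
    Fintype.sum_prod_type, Fintype.sum_bool]
  simp only [Fin.consEquiv, Equiv.coe_fn_mk]
  congr 1
  · simp [dyckSum, sum_filter, mul_sum, isDyckFrom_cons_true, pathWeight_cons_true]
  · cases h with
    | zero => simp [not_isDyckFrom_zero_cons_false]
    | succ h =>
      simp [dyckSum, sum_filter, mul_sum, isDyckFrom_succ_cons_false, pathWeight_succ_cons_false]

theorem dyckSum_eq_dyckTransfer_pow_apply (u d : ℕ → R) (m : ℕ) :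
    dyckSum u d m = (dyckTransfer u d ^ m) (Pi.single 0 1) := by
  induction m with
  | zero => exact dyckSum_zero u d
  | succ m ih => rw [dyckSum_succ, ih, pow_succ', Module.End.mul_apply]

theorem pow_mul_dyckSum (c : R) (u d : ℕ → R) (m h : ℕ) :
    c ^ m * dyckSum u d m h = dyckSum (fun k ↦ c * u k) (fun k ↦ c * d k) m h := by
  rw [dyckSum, mul_sum]
  refine sum_congr rfl fun s _ ↦ ?_
  simp only [pathWeight, ← mul_ite, prod_mul_distrib, prod_const, card_univ, Fintype.card_fin]

theorem Esec_eq_dyckSum (n : ℕ) : Esec n = dyckSum (fun h ↦ qNum (h + 1)) qNum (2 * n) 0 := by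
  simp [Esec, dyckSum, pathWeight, isDyckFrom_zero_iff]

end DyckPaths

section SecantTransfer

variable {R : Type*} [CommRing R]

/-- The transfer operator of the paths counted by `(1 - q)^{2n} E_{2n}(q)`. -/
def secantTransfer (q : R) : Module.End R (ℕ → R) :=
  dyckTransfer (fun h ↦ 1 - q ^ (h + 1)) (fun h ↦ 1 - q ^ h)

theorem one_sub_X_pow_mul_Esec (n : ℕ) :
    (1 - X) ^ (2 * n) * Esec n = (secantTransfer X ^ (2 * n)) (Pi.single 0 1) 0 := by
  have one_sub_X_mul_qNum (k : ℕ) : (1 - X) * qNum k = 1 - X ^ k := mul_neg_geom_sum X k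
  rw [Esec_eq_dyckSum, pow_mul_dyckSum, dyckSum_eq_dyckTransfer_pow_apply]
  simp only [one_sub_X_mul_qNum, secantTransfer]

theorem secantTransfer_mul_rightShift (q : R) :
    secantTransfer q * rightShift R =
      q • (rightShift R * secantTransfer q) + (1 - q) • (1 + rightShift R * rightShift R) := by
  ext f (_ | _ | h) <;>
    simp only [secantTransfer, dyckTransfer_apply, Module.End.mul_apply, Module.End.one_apply,
      LinearMap.add_apply, LinearMap.smul_apply, Pi.add_apply, Pi.smul_apply,
      smul_eq_mul, rightShift_apply_zero, rightShift_apply_succ] <;>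
    ring

theorem secantTransfer_single_zero_one (q : R) :
    secantTransfer q (Pi.single 0 1) = (1 - q) • rightShift R (Pi.single 0 1) := by
  ext (_ | _ | h) <;> simp [secantTransfer, dyckTransfer_apply]

theorem eval_zero_dickson_one_two_mul (q : R) (k : ℕ) :
    (dickson 1 q (2 * k)).eval 0 = 2 * (-q) ^ k := by
  induction k with
  | zero => norm_num
  | succ k ih =>
    rw [mul_add_one, dickson_add_two, eval_sub, eval_mul, eval_mul, eval_X, eval_C, ih]
    ring

/-- The vector `S_k(T) δ_0` for `T = secantTransfer q`, with `S_k` the rescaled Chebyshev polynomial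
of the second kind. -/
def secantChebyshev (q : R) (k : ℤ) : ℕ → R :=
  aeval (secantTransfer q) (Chebyshev.S R k) (Pi.single 0 1)

theorem secantTransfer_secantChebyshev (q : R) (k : ℤ) :
    secantTransfer q (secantChebyshev q k) =
      secantChebyshev q (k + 1) + secantChebyshev q (k - 1) := by
  simp [secantChebyshev, Chebyshev.S_add_one]

theorem secantChebyshev_eq_smul_add_smul (q : R) (k : ℕ) :
    secantChebyshev q k =
      q ^ k • secantChebyshev q (k - 2) +
        (1 - q ^ k) • rightShift R (secantChebyshev q (k - 1)) +
        (dickson 1 q k).eval 0 • Pi.single 0 1 :=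
  eq_smul_add_smul_of_three_term_of_q_commutation (secantTransfer_mul_rightShift q)
    (by simp [secantTransfer_single_zero_one]) (secantTransfer_secantChebyshev q)
    (by simp [secantChebyshev]) (by simp [secantChebyshev]) k

theorem secantChebyshev_two_mul_succ_apply_zero (q : R) (k : ℕ) :
    secantChebyshev q (2 * (k + 1) : ℕ) 0 =
      q ^ (2 * (k + 1)) * secantChebyshev q (2 * k : ℕ) 0 + 2 * (-q) ^ (k + 1) := by
  rw [secantChebyshev_eq_smul_add_smul, eval_zero_dickson_one_two_mul,
    show ((2 * (k + 1) : ℕ) : ℤ) - 2 = (2 * k : ℕ) by omega]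
  simp

theorem sum_neg_one_pow_mul_pow_succ (q : R) (k : ℕ) :
    ∑ i ∈ range (2 * (k + 1) + 1),
        (-1) ^ (i + (k + 1)) * q ^ (i * (2 * (k + 1) - i) + (k + 1)) =
      q ^ (2 * (k + 1)) * ∑ i ∈ range (2 * k + 1), (-1) ^ (i + k) * q ^ (i * (2 * k - i) + k) +
        2 * (-q) ^ (k + 1) := by
  have interior : ∀ i ∈ range (2 * k + 1),
      (-1) ^ (i + 1 + (k + 1)) * q ^ ((i + 1) * (2 * (k + 1) - (i + 1)) + (k + 1)) =
        q ^ (2 * (k + 1)) * ((-1) ^ (i + k) * q ^ (i * (2 * k - i) + k)) := by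
    intro i hi
    obtain ⟨j, hj⟩ := Nat.exists_eq_add_of_le (mem_range_succ_iff.mp hi)
    rw [show 2 * (k + 1) - (i + 1) = j + 1 by omega, show 2 * k - i = j by omega,
      show (i + 1) * (j + 1) + (k + 1) = 2 * (k + 1) + (i * j + k) by linarith]
    ring
  have sign : (-1 : R) ^ (2 * (k + 1)) = 1 := (even_two_mul (k + 1)).neg_one_pow
  rw [sum_range_succ, mul_add_one 2 k, sum_range_succ', ← mul_add_one 2 k, sum_congr rfl interior,
    ← mul_sum, neg_pow q, pow_add _ (2 * (k + 1)), sign]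
  simp only [Nat.sub_self, mul_zero, zero_mul, zero_add]
  ring

theorem secantChebyshev_two_mul_apply_zero (q : R) (k : ℕ) :
    secantChebyshev q (2 * k : ℕ) 0 =
      ∑ i ∈ range (2 * k + 1), (-1) ^ (i + k) * q ^ (i * (2 * k - i) + k) := by
  induction k with
  | zero => simp [secantChebyshev]
  | succ k ih =>
    rw [secantChebyshev_two_mul_succ_apply_zero, ih, sum_neg_one_pow_mul_pow_succ]

theorem secantTransfer_pow_two_mul_apply_zero (q : R) (n : ℕ) :
    (secantTransfer q ^ (2 * n)) (Pi.single 0 1) 0 = ∑ k ∈ range (n + 1),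
      ((chooseInt (2 * n) ((n : ℤ) - k) - chooseInt (2 * n) ((n : ℤ) - k - 1) : ℤ) : R) *
        ∑ i ∈ range (2 * k + 1), (-1) ^ (i + k) * q ^ (i * (2 * k - i) + k) := by
  rw [← aeval_X_pow (R := R) (secantTransfer q), X_pow_two_mul_eq_sum_S]
  simp only [← zsmul_eq_mul, map_sum, map_zsmul, LinearMap.sum_apply, Finset.sum_apply,
    LinearMap.smul_apply, Pi.smul_apply, ← secantChebyshev_two_mul_apply_zero, secantChebyshev]

end SecantTransfer

theorem stmt12 (n : ℕ) :
    (1 - X : Polynomial ℤ) ^ (2*n) * Esec n =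
      ∑ k ∈ Finset.range (n+1),
        ((chooseInt (2*n) ((n : ℤ) - k) - chooseInt (2*n) ((n : ℤ) - k - 1) : ℤ) :
            Polynomial ℤ) *
          ∑ i ∈ Finset.range (2*k+1), (-1 : Polynomial ℤ)^(i+k) * X ^ (i * (2*k-i) + k) := by
  rw [one_sub_X_pow_mul_Esec, secantTransfer_pow_two_mul_apply_zero]
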